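/- Let S = Q[x_0,x_1,x_2,x_3] and let I = (x_0 x_2, x_1 x_2, x_0 x_3, x_1 x_3, x_0^2 x_1 − x_0 x_1^2, x_2^2 x_3 − x_2 x_3^2) be the ideal of the six points in P^3(Q) lying on the two disjoint lines V(x_0,x_1) and V(x_2,x_3). Then there exists a linear form L ∈ S_1 that is a nonzerodivisor on S/I such that the Artinian reduction A = S/(I + (L)) has Hilbert function dim A_0 = 1, dim A_1 = 3, dim A_2 = 2, A_i = 0 for i ≥ 3, and A has the Weak Lefschetz Property: there exists a linear form l ∈ A_1 such that the multiplication map ·l : A_i → A_{i+1} has full rank for every i ≥ 0. -/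

import Mathlib

/-!
The linear form `L = x₀ + x₁ + x₂ + x₃` vanishes at none of the six points
`(1,0,0,0), (0,1,0,0), (1,1,0,0), (0,0,1,0), (0,0,0,1), (0,0,1,1)`.

*Nonzerodivisor.* Each point `P` gives the homomorphism `x ↦ P t` from `S` to `ℚ[t]`, the restriction
to the affine cone over `P`. The ideal `I` is the intersection of the kernels of these six maps
(`mem_sixPointsIdeal_of_pointMap`): modulo `I` every polynomial has the normal form
`k + x₀ p(x₀) + x₁ q(x₁) + x₀ x₁ r(x₁) + x₂ s(x₂) + x₃ u(x₃) + x₂ x₃ v(x₃)`, and the six restrictions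
determine `k, p, q, r, s, u, v`. As `L` restricts to a nonzero multiple of `t` on every cone
and `ℚ[t]` is a domain, `L` is a nonzerodivisor modulo `I`.

*Hilbert function.* In `A = S/(I + (L))` the relations give `x₀² = x₁² = -x₀x₁`,
`x₂² = x₃² = -x₂x₃` and the vanishing of all cubic monomials, so that `A₁` is spanned by
`x₀, x₁, x₂`, `A₂` by `x₀x₁, x₂x₃`, and `Aᵢ = 0` for `i ≥ 3`. These spanning sets are independent:
the substitutions `(t, -t, 0, 0)` and `(0, 0, t, -t)` map `I + (L)` into `(t³)`, and
`(t, 0, 0, -t)` maps it into `(t²)`, so the low coefficients of the images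
are well defined on `A` and separate the spanning elements.

*Weak Lefschetz.* For `l = x₀ + x₂`, multiplication `A₀ → A₁` is injective as `l ≠ 0`, and
`A₁ → A₂` is onto since `l x₁ = x₀x₁` and `l x₂ = x₂² = -x₂x₃`; all later targets vanish.
-/

open MvPolynomial

/-- The degree-`d` graded piece of the quotient `S ⧸ I`. -/
noncomputable def quotPiece {K : Type} [Field K] {σ : Type}
    (I : Ideal (MvPolynomial σ K)) (d : ℕ) : Submodule K (MvPolynomial σ K ⧸ I) :=
  (MvPolynomial.homogeneousSubmodule σ K d).map (Ideal.Quotient.mkₐ K I).toLinearMap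

/-- The ideal of the six points on two disjoint lines in `ℙ³`;
here `X 0, X 1, X 2, X 3` stand for `x_0, x_1, x_2, x_3`. -/
noncomputable def sixPointsIdeal : Ideal (MvPolynomial (Fin 4) ℚ) :=
  Ideal.span
    {X 0 * X 2, X 1 * X 2, X 0 * X 3, X 1 * X 3,
     X 0 ^ 2 * X 1 - X 0 * X 1 ^ 2, X 2 ^ 2 * X 3 - X 2 * X 3 ^ 2}

/-! ### Restriction to the cones over the points -/

/-- The substitution `xᵢ ↦ vᵢ t`, i.e. restriction of polynomials to the line through `v`. -/
noncomputable def pointMap (v : Fin 4 → ℚ) : MvPolynomial (Fin 4) ℚ →ₐ[ℚ] Polynomial ℚ :=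
  aeval fun i => Polynomial.C (v i) * Polynomial.X

lemma pointMap_X (v : Fin 4 → ℚ) (i : Fin 4) :
    pointMap v (X i) = Polynomial.C (v i) * Polynomial.X := by
  simp [pointMap]

/-- The linear form used for the Artinian reduction. -/
noncomputable def sumForm : MvPolynomial (Fin 4) ℚ := X 0 + X 1 + X 2 + X 3

lemma pointMap_eq_zero_of_mem {v : Fin 4 → ℚ}
    (h02 : v 0 * v 2 = 0) (h12 : v 1 * v 2 = 0) (h03 : v 0 * v 3 = 0) (h13 : v 1 * v 3 = 0)
    (h01 : v 0 ^ 2 * v 1 = v 0 * v 1 ^ 2) (h23 : v 2 ^ 2 * v 3 = v 2 * v 3 ^ 2)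
    {g : MvPolynomial (Fin 4) ℚ} (hg : g ∈ sixPointsIdeal) : pointMap v g = 0 := by
  have key : sixPointsIdeal ≤ RingHom.ker (pointMap v) := by
    rw [sixPointsIdeal, Ideal.span_le]
    have h02' := congrArg (Polynomial.C (R := ℚ)) h02
    have h12' := congrArg (Polynomial.C (R := ℚ)) h12
    have h03' := congrArg (Polynomial.C (R := ℚ)) h03
    have h13' := congrArg (Polynomial.C (R := ℚ)) h13
    have h01' := congrArg (Polynomial.C (R := ℚ)) h01
    have h23' := congrArg (Polynomial.C (R := ℚ)) h23
    simp only [map_mul, map_pow, map_zero] at h02' h12' h03' h13' h01' h23'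
    rintro f (rfl | rfl | rfl | rfl | rfl | rfl) <;>
      simp only [SetLike.mem_coe, RingHom.mem_ker, map_mul, map_sub, map_pow, pointMap_X]
    · linear_combination Polynomial.X ^ 2 * h02'
    · linear_combination Polynomial.X ^ 2 * h12'
    · linear_combination Polynomial.X ^ 2 * h03'
    · linear_combination Polynomial.X ^ 2 * h13'
    · linear_combination Polynomial.X ^ 3 * h01'
    · linear_combination Polynomial.X ^ 3 * h23'
  exact key hg

lemma mem_sixPointsIdeal_generators :
    X 0 * X 2 ∈ sixPointsIdeal ∧ X 1 * X 2 ∈ sixPointsIdeal ∧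
    X 0 * X 3 ∈ sixPointsIdeal ∧ X 1 * X 3 ∈ sixPointsIdeal ∧
    X 0 ^ 2 * X 1 - X 0 * X 1 ^ 2 ∈ sixPointsIdeal ∧
    X 2 ^ 2 * X 3 - X 2 * X 3 ^ 2 ∈ sixPointsIdeal := by
  refine ⟨?_, ?_, ?_, ?_, ?_, ?_⟩ <;> exact Ideal.subset_span (by simp)

/-! ### Normal forms modulo the ideal of the points -/

/-- The normal form `k + x₀ p(x₀) + x₁ q(x₁) + x₀ x₁ r(x₁) + x₂ s(x₂) + x₃ u(x₃) + x₂ x₃ v(x₃)`,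
evaluated at elements `a, b, c, d` of a commutative `ℚ`-algebra. -/
noncomputable def normalForm {B : Type} [CommRing B] [Algebra ℚ B] (a b c d : B)
    (k : ℚ) (p q r s u v : Polynomial ℚ) : B :=
  algebraMap ℚ B k + a * Polynomial.aeval a p + b * Polynomial.aeval b q
    + a * b * Polynomial.aeval b r + c * Polynomial.aeval c s + d * Polynomial.aeval d u
    + c * d * Polynomial.aeval d v

/-- If `a²b = ab²`, the variable in the coefficient of `ab` may be exchanged. -/
lemma mul_mul_aeval_swap {B : Type} [CommRing B] [Algebra ℚ B] {a b : B}
    (h : a ^ 2 * b = a * b ^ 2) (p : Polynomial ℚ) :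
    a * b * Polynomial.aeval a p = a * b * Polynomial.aeval b p := by
  obtain ⟨e, he⟩ := Polynomial.sub_dvd_eval_sub a b (p.map (algebraMap ℚ B))
  rw [Polynomial.eval_map_algebraMap, Polynomial.eval_map_algebraMap] at he
  linear_combination a * b * he + e * h

/-- Normal forms are closed under multiplication by each of the four elements. -/
lemma normalForm_mul {B : Type} [CommRing B] [Algebra ℚ B] (w : Fin 4 → B)
    (h02 : w 0 * w 2 = 0) (h12 : w 1 * w 2 = 0) (h03 : w 0 * w 3 = 0) (h13 : w 1 * w 3 = 0)
    (h01 : w 0 ^ 2 * w 1 = w 0 * w 1 ^ 2) (h23 : w 2 ^ 2 * w 3 = w 2 * w 3 ^ 2)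
    (k : ℚ) (p q r s u v : Polynomial ℚ) (i : Fin 4) :
    ∃ k' p' q' r' s' u' v', normalForm (w 0) (w 1) (w 2) (w 3) k p q r s u v * w i =
      normalForm (w 0) (w 1) (w 2) (w 3) k' p' q' r' s' u' v' := by
  have hp := mul_mul_aeval_swap h01 p
  have hs := mul_mul_aeval_swap h23 s
  fin_cases i
  · refine ⟨0, Polynomial.C k + Polynomial.X * p, 0, q + Polynomial.X * r, 0, 0, 0, ?_⟩
    simp only [normalForm, map_add, map_mul, map_zero, Polynomial.aeval_C, Polynomial.aeval_X,
      Fin.zero_eta]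
    linear_combination Polynomial.aeval (w 1) r * h01
      + (Polynomial.aeval (w 2) s + w 3 * Polynomial.aeval (w 3) v) * h02
      + Polynomial.aeval (w 3) u * h03
  · refine ⟨0, 0, Polynomial.C k + Polynomial.X * q, p + Polynomial.X * r, 0, 0, 0, ?_⟩
    simp only [normalForm, map_add, map_mul, map_zero, Polynomial.aeval_C, Polynomial.aeval_X,
      Fin.mk_one]
    linear_combination hp + (Polynomial.aeval (w 2) s + w 3 * Polynomial.aeval (w 3) v) * h12
      + Polynomial.aeval (w 3) u * h13
  · refine ⟨0, 0, 0, 0, Polynomial.C k + Polynomial.X * s, 0, u + Polynomial.X * v, ?_⟩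
    simp only [normalForm, map_add, map_mul, map_zero, Polynomial.aeval_C, Polynomial.aeval_X,
      Fin.reduceFinMk]
    linear_combination Polynomial.aeval (w 3) v * h23
      + (Polynomial.aeval (w 0) p + w 1 * Polynomial.aeval (w 1) r) * h02
      + Polynomial.aeval (w 1) q * h12
  · refine ⟨0, 0, 0, 0, 0, Polynomial.C k + Polynomial.X * u, s + Polynomial.X * v, ?_⟩
    simp only [normalForm, map_add, map_mul, map_zero, Polynomial.aeval_C, Polynomial.aeval_X,
      Fin.reduceFinMk]
    linear_combination hs + (Polynomial.aeval (w 0) p + w 1 * Polynomial.aeval (w 1) r) * h03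
      + Polynomial.aeval (w 1) q * h13

lemma exists_normalForm (g : MvPolynomial (Fin 4) ℚ) :
    ∃ k p q r s u v, g - normalForm (X 0) (X 1) (X 2) (X 3) k p q r s u v ∈ sixPointsIdeal := by
  obtain ⟨h02, h12, h03, h13, h01, h23⟩ := mem_sixPointsIdeal_generators
  simp only [← Ideal.Quotient.eq_zero_iff_mem, map_mul, map_sub, map_pow, sub_eq_zero]
    at h02 h12 h03 h13 h01 h23
  have hmk : ∀ k p q r s u v, Ideal.Quotient.mk sixPointsIdeal
      (normalForm (X 0) (X 1) (X 2) (X 3) k p q r s u v) =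
      normalForm (Ideal.Quotient.mk sixPointsIdeal (X 0)) (Ideal.Quotient.mk sixPointsIdeal (X 1))
        (Ideal.Quotient.mk sixPointsIdeal (X 2)) (Ideal.Quotient.mk sixPointsIdeal (X 3))
        k p q r s u v := by
    intro k p q r s u v
    simp only [← Ideal.Quotient.mkₐ_eq_mk ℚ, normalForm, map_add, map_mul, AlgHom.commutes,
      Polynomial.aeval_algHom_apply]
  simp only [← Ideal.Quotient.eq_zero_iff_mem, map_sub, sub_eq_zero, hmk]
  induction g using MvPolynomial.induction_on with
  | C k =>
    refine ⟨k, 0, 0, 0, 0, 0, 0, ?_⟩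
    simp [normalForm]
    rfl
  | add f g hf hg =>
    obtain ⟨k, p, q, r, s, u, v, h⟩ := hf
    obtain ⟨k', p', q', r', s', u', v', h'⟩ := hg
    refine ⟨k + k', p + p', q + q', r + r', s + s', u + u', v + v', ?_⟩
    rw [map_add, h, h']
    simp only [normalForm, map_add]
    ring
  | mul_X f i hf =>
    obtain ⟨k, p, q, r, s, u, v, h⟩ := hf
    rw [map_mul, h]
    exact normalForm_mul (fun i => Ideal.Quotient.mk sixPointsIdeal (X i))
      h02 h12 h03 h13 h01 h23 k p q r s u v i

/-- The six points of the configuration. -/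
def sixPoints : Fin 6 → Fin 4 → ℚ :=
  ![![1, 0, 0, 0], ![0, 1, 0, 0], ![1, 1, 0, 0], ![0, 0, 1, 0], ![0, 0, 0, 1], ![0, 0, 1, 1]]

lemma pointMap_sixPoints_eq_zero {g : MvPolynomial (Fin 4) ℚ} (hg : g ∈ sixPointsIdeal)
    (j : Fin 6) : pointMap (sixPoints j) g = 0 := by
  refine pointMap_eq_zero_of_mem ?_ ?_ ?_ ?_ ?_ ?_ hg <;> fin_cases j <;> simp [sixPoints]

lemma pointMap_normalForm (w : Fin 4 → ℚ) (k : ℚ) (p q r s u v : Polynomial ℚ) :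
    pointMap w (normalForm (X 0) (X 1) (X 2) (X 3) k p q r s u v) =
      normalForm (Polynomial.C (w 0) * Polynomial.X) (Polynomial.C (w 1) * Polynomial.X)
        (Polynomial.C (w 2) * Polynomial.X) (Polynomial.C (w 3) * Polynomial.X)
        k p q r s u v := by
  simp only [normalForm, map_add, map_mul, AlgHom.commutes, ← Polynomial.aeval_algHom_apply,
    pointMap_X]

/-- A polynomial vanishing on the cones over all six points lies in the ideal. -/
lemma mem_sixPointsIdeal_of_pointMap {g : MvPolynomial (Fin 4) ℚ}
    (hg : ∀ j, pointMap (sixPoints j) g = 0) : g ∈ sixPointsIdeal := by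
  obtain ⟨k, p, q, r, s, u, v, h⟩ := exists_normalForm g
  have hN : ∀ j, pointMap (sixPoints j) (normalForm (X 0) (X 1) (X 2) (X 3) k p q r s u v) = 0 := by
    intro j
    have := pointMap_sixPoints_eq_zero h j
    rwa [map_sub, hg, zero_sub, neg_eq_zero] at this
  simp only [pointMap_normalForm] at hN
  have e0 := hN 0
  have e1 := hN 1
  have e2 := hN 2
  have e3 := hN 3
  have e4 := hN 4
  have e5 := hN 5
  simp [sixPoints, normalForm] at e0 e1 e2 e3 e4 e5
  have hk : k = 0 := by simpa using congrArg (Polynomial.eval 0) e0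
  subst hk
  simp at e0 e1 e3 e4
  subst e0 e1 e3 e4
  simp at e2 e5
  subst e2 e5
  simpa [normalForm] using h

lemma sumForm_nonzerodivisor (g : MvPolynomial (Fin 4) ℚ) (h : sumForm * g ∈ sixPointsIdeal) :
    g ∈ sixPointsIdeal := by
  refine mem_sixPointsIdeal_of_pointMap fun j => ?_
  have h1 := pointMap_sixPoints_eq_zero h j
  rw [map_mul, mul_eq_zero] at h1
  refine h1.resolve_left fun h2 => ?_
  have h3 := congrArg (Polynomial.eval 1) h2
  simp only [sumForm, map_add, pointMap_X] at h3
  revert h3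
  fin_cases j <;> simp [sixPoints]

/-! ### The Artinian reduction -/

lemma quotPiece_zero_eq_span (I : Ideal (MvPolynomial (Fin 4) ℚ)) :
    quotPiece I 0 = Submodule.span ℚ {1} := by
  rw [quotPiece, homogeneousSubmodule_zero, Submodule.one_eq_span, Submodule.map_span,
    Set.image_singleton]
  rfl

/-- The polynomial ring is generated in degree one, so `A_{m+n}` is spanned by the products of
spanning sets of `A_m` and `A_n`. -/
lemma quotPiece_add_eq_span {I : Ideal (MvPolynomial (Fin 4) ℚ)} {m n : ℕ}
    {s t : Set (MvPolynomial (Fin 4) ℚ ⧸ I)}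
    (hs : quotPiece I m = Submodule.span ℚ s) (ht : quotPiece I n = Submodule.span ℚ t) :
    quotPiece I (m + n) = Submodule.span ℚ (Set.image2 (· * ·) s t) := by
  have h := Submodule.map_mul (homogeneousSubmodule (Fin 4) ℚ m)
    (homogeneousSubmodule (Fin 4) ℚ n) (Ideal.Quotient.mkₐ ℚ I)
  have hmn : homogeneousSubmodule (Fin 4) ℚ m * homogeneousSubmodule (Fin 4) ℚ n =
      homogeneousSubmodule (Fin 4) ℚ (m + n) := by
    rw [← homogeneousSubmodule_one_pow ℚ (m + n), pow_add, homogeneousSubmodule_one_pow,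
      homogeneousSubmodule_one_pow]
  rw [hmn] at h
  refine h.trans ?_
  refine Eq.trans (congrArg₂ (· * ·) hs ht) ?_
  exact Submodule.span_mul_span ℚ s t

lemma quotPiece_one_eq_span (I : Ideal (MvPolynomial (Fin 4) ℚ)) :
    quotPiece I 1 =
      Submodule.span ℚ (Set.range fun i : Fin 4 => Ideal.Quotient.mk I (X i)) := by
  rw [quotPiece, homogeneousSubmodule_one_eq_span_X, Submodule.map_span, ← Set.range_comp]
  rfl

/-- The ideal `I + (L)` defining the Artinian reduction. -/
noncomputable abbrev artinIdeal : Ideal (MvPolynomial (Fin 4) ℚ) :=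
  sixPointsIdeal + Ideal.span {sumForm}

/-- The class of the variable `xᵢ` in the Artinian reduction. -/
noncomputable abbrev artinVar (i : Fin 4) : MvPolynomial (Fin 4) ℚ ⧸ artinIdeal :=
  Ideal.Quotient.mk artinIdeal (X i)

lemma artinVar_relations :
    artinVar 0 * artinVar 2 = 0 ∧ artinVar 1 * artinVar 2 = 0 ∧
    artinVar 0 * artinVar 3 = 0 ∧ artinVar 1 * artinVar 3 = 0 ∧
    artinVar 0 ^ 2 * artinVar 1 = artinVar 0 * artinVar 1 ^ 2 ∧
    artinVar 2 ^ 2 * artinVar 3 = artinVar 2 * artinVar 3 ^ 2 ∧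
    artinVar 3 = -artinVar 0 - artinVar 1 - artinVar 2 := by
  have hle : sixPointsIdeal ≤ artinIdeal := le_sup_left
  have hL : Ideal.Quotient.mk artinIdeal sumForm = 0 := by
    rw [Ideal.Quotient.eq_zero_iff_mem]
    exact (le_sup_right : Ideal.span {sumForm} ≤ artinIdeal) (Ideal.mem_span_singleton_self _)
  obtain ⟨h02, h12, h03, h13, h01, h23⟩ := mem_sixPointsIdeal_generators
  replace h02 := hle h02
  replace h12 := hle h12
  replace h03 := hle h03
  replace h13 := hle h13
  replace h01 := hle h01
  replace h23 := hle h23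
  simp only [← Ideal.Quotient.eq_zero_iff_mem, map_mul, map_sub, map_pow, sub_eq_zero]
    at h02 h12 h03 h13 h01 h23
  refine ⟨h02, h12, h03, h13, h01, h23, ?_⟩
  simp only [sumForm, map_add] at hL
  linear_combination hL

lemma quotPiece_zero_eq : quotPiece artinIdeal 0 = Submodule.span ℚ (Set.range ![1]) := by
  rw [quotPiece_zero_eq_span]
  simp

lemma quotPiece_one_eq : quotPiece artinIdeal 1 =
    Submodule.span ℚ (Set.range ![artinVar 0, artinVar 1, artinVar 2]) := by
  obtain ⟨-, -, -, -, -, -, h⟩ := artinVar_relations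
  rw [quotPiece_one_eq_span]
  have m : ∀ i, ![artinVar 0, artinVar 1, artinVar 2] i ∈
      Submodule.span ℚ (Set.range ![artinVar 0, artinVar 1, artinVar 2]) :=
    fun i => Submodule.subset_span ⟨i, rfl⟩
  apply le_antisymm <;> rw [Submodule.span_le] <;> rintro _ ⟨i, rfl⟩
  · fin_cases i
    · exact m 0
    · exact m 1
    · exact m 2
    · change artinVar 3 ∈ _
      rw [h]
      exact sub_mem (sub_mem (neg_mem (m 0)) (m 1)) (m 2)
  · fin_cases i <;> exact Submodule.subset_span ⟨_, rfl⟩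

lemma quotPiece_two_eq : quotPiece artinIdeal 2 =
    Submodule.span ℚ (Set.range ![artinVar 0 * artinVar 1, artinVar 2 * artinVar 3]) := by
  obtain ⟨h02, h12, h03, h13, -, -, h⟩ := artinVar_relations
  have m : ∀ i, ![artinVar 0 * artinVar 1, artinVar 2 * artinVar 3] i ∈
      Submodule.span ℚ (Set.range ![artinVar 0 * artinVar 1, artinVar 2 * artinVar 3]) :=
    fun i => Submodule.subset_span ⟨i, rfl⟩
  apply le_antisymm
  · rw [← one_add_one_eq_two, quotPiece_add_eq_span quotPiece_one_eq quotPiece_one_eq,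
      Submodule.span_le]
    rintro _ ⟨_, ⟨i, rfl⟩, _, ⟨j, rfl⟩, rfl⟩
    have h00 : artinVar 0 * artinVar 0 = -(artinVar 0 * artinVar 1) := by
      linear_combination artinVar 0 * h - h03 - h02
    have h11 : artinVar 1 * artinVar 1 = -(artinVar 0 * artinVar 1) := by
      linear_combination artinVar 1 * h - h13 - h12
    have h22 : artinVar 2 * artinVar 2 = -(artinVar 2 * artinVar 3) := by
      linear_combination artinVar 2 * h - h02 - h12
    have h10 : artinVar 1 * artinVar 0 = artinVar 0 * artinVar 1 := mul_comm _ _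
    have h20 : artinVar 2 * artinVar 0 = 0 := by rw [mul_comm, h02]
    have h21 : artinVar 2 * artinVar 1 = 0 := by rw [mul_comm, h12]
    fin_cases i <;> fin_cases j <;>
      simp only [Fin.zero_eta, Fin.mk_one, Fin.reduceFinMk, Matrix.cons_val, SetLike.mem_coe,
        h00, h11, h22, h10, h20, h21, h02, h12, neg_mem_iff, zero_mem]
    exacts [m 0, m 0, m 0, m 0, m 1]
  · rw [Submodule.span_le, ← one_add_one_eq_two,
      quotPiece_add_eq_span (quotPiece_one_eq_span _) (quotPiece_one_eq_span _)]
    rintro _ ⟨i, rfl⟩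
    fin_cases i <;> exact Submodule.subset_span ⟨_, ⟨_, rfl⟩, _, ⟨_, rfl⟩, rfl⟩

lemma quotPiece_three_eq : quotPiece artinIdeal 3 = ⊥ := by
  obtain ⟨h02, h12, h03, h13, h01, h23, h⟩ := artinVar_relations
  rw [← two_add_one_eq_three, quotPiece_add_eq_span quotPiece_two_eq quotPiece_one_eq,
    Submodule.span_eq_bot]
  rintro _ ⟨_, ⟨i, rfl⟩, _, ⟨j, rfl⟩, rfl⟩
  have two : ∀ z : MvPolynomial (Fin 4) ℚ ⧸ artinIdeal, 2 * z = 0 → z = 0 := by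
    intro z hz
    have half : Ideal.Quotient.mk artinIdeal (C (1 / 2)) * 2 = 1 := by
      rw [← map_ofNat (Ideal.Quotient.mk artinIdeal) 2, ← map_mul, ← map_ofNat C 2, ← map_mul]
      norm_num
    linear_combination Ideal.Quotient.mk artinIdeal (C (1 / 2)) * hz - z * half
  -- `x₀²x₁ = -x₀x₁²` follows from `x₀x₁L = 0`; with `x₀²x₁ = x₀x₁²` this kills both cubics.
  have h001 : artinVar 0 * artinVar 1 * artinVar 0 = 0 := two _ (by
    linear_combination artinVar 0 * artinVar 1 * h - artinVar 0 * h12 - artinVar 0 * h13 + h01)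
  have h011 : artinVar 0 * artinVar 1 * artinVar 1 = 0 := by linear_combination h001 - h01
  have h232 : artinVar 2 * artinVar 3 * artinVar 2 = 0 := two _ (by
    linear_combination artinVar 2 * artinVar 3 * h - artinVar 3 * h02 - artinVar 3 * h12 + h23)
  fin_cases i <;> fin_cases j <;>
    simp only [Fin.zero_eta, Fin.mk_one, Fin.reduceFinMk, Matrix.cons_val]
  · exact h001
  · exact h011
  · linear_combination artinVar 0 * h12
  · linear_combination artinVar 3 * h02
  · linear_combination artinVar 3 * h12
  · exact h232

lemma quotPiece_eq_bot {i : ℕ} (hi : 3 ≤ i) : quotPiece artinIdeal i = ⊥ := by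
  obtain ⟨j, rfl⟩ := Nat.exists_eq_add_of_le hi
  have h3 : quotPiece artinIdeal 3 = Submodule.span ℚ ∅ := by
    rw [quotPiece_three_eq, Submodule.span_empty]
  rw [quotPiece_add_eq_span h3 (Submodule.span_eq _).symm, Set.image2_empty_left,
    Submodule.span_empty]

/-! ### Functionals on the Artinian reduction -/

/-- If the substitution `xᵢ ↦ wᵢ t` kills `L` and sends the generators of the ideal of the points
into `(tⁿ)`, the coefficients of `1, t, …, tⁿ⁻¹` descend to the Artinian reduction. -/
lemma coeff_pointMap_of_dvd {w : Fin 4 → ℚ} {n : ℕ}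
    (hgen : ∀ f ∈ ({X 0 * X 2, X 1 * X 2, X 0 * X 3, X 1 * X 3,
      X 0 ^ 2 * X 1 - X 0 * X 1 ^ 2, X 2 ^ 2 * X 3 - X 2 * X 3 ^ 2} :
      Set (MvPolynomial (Fin 4) ℚ)), Polynomial.X ^ n ∣ pointMap w f)
    (hL : pointMap w sumForm = 0) {g : MvPolynomial (Fin 4) ℚ} (hg : g ∈ artinIdeal) {d : ℕ}
    (hd : d < n) : (pointMap w g).coeff d = 0 := by
  have key : artinIdeal ≤ (Ideal.span {Polynomial.X ^ n}).comap (pointMap w) := by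
    refine sup_le ?_ ?_
    · rw [sixPointsIdeal, Ideal.span_le]
      exact fun f hf => Ideal.mem_span_singleton.2 (hgen f hf)
    · rw [Ideal.span_singleton_le_iff_mem, Ideal.mem_comap, hL]
      exact zero_mem _
  exact Polynomial.X_pow_dvd_iff.1 (Ideal.mem_span_singleton.1 (key hg)) d hd

lemma coeff_pointMap_first {g : MvPolynomial (Fin 4) ℚ} (hg : g ∈ artinIdeal) {d : ℕ}
    (hd : d < 3) : (pointMap ![1, -1, 0, 0] g).coeff d = 0 := by
  refine coeff_pointMap_of_dvd ?_ ?_ hg hd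
  · rintro f (rfl | rfl | rfl | rfl | rfl | rfl) <;> simp [pointMap_X]
    exact ⟨-2, by ring⟩
  · simp [sumForm, pointMap_X]

lemma coeff_pointMap_second {g : MvPolynomial (Fin 4) ℚ} (hg : g ∈ artinIdeal) {d : ℕ}
    (hd : d < 3) : (pointMap ![0, 0, 1, -1] g).coeff d = 0 := by
  refine coeff_pointMap_of_dvd ?_ ?_ hg hd
  · rintro f (rfl | rfl | rfl | rfl | rfl | rfl) <;> simp [pointMap_X]
    exact ⟨-2, by ring⟩
  · simp [sumForm, pointMap_X]

/-- The vector `(1, 0, 0, -1)` lies on neither of the two lines: `x₀x₃` restricts to `-t²`, so only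
coefficients below degree two descend to the quotient. The linear coefficient tells `x₀` from
`-x₁`, which `(1, -1, 0, 0)` and `(0, 0, 1, -1)` cannot. -/
lemma coeff_pointMap_mixed {g : MvPolynomial (Fin 4) ℚ} (hg : g ∈ artinIdeal) {d : ℕ}
    (hd : d < 2) : (pointMap ![1, 0, 0, -1] g).coeff d = 0 := by
  refine coeff_pointMap_of_dvd ?_ ?_ hg hd
  · rintro f (rfl | rfl | rfl | rfl | rfl | rfl) <;> simp [pointMap_X]
    exact ⟨1, by ring⟩
  · simp [sumForm, pointMap_X]

lemma linearIndependent_zero :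
    LinearIndependent ℚ ![(1 : MvPolynomial (Fin 4) ℚ ⧸ artinIdeal)] := by
  refine LinearIndependent.of_subsingleton 0 fun h => ?_
  have h1 : (1 : MvPolynomial (Fin 4) ℚ) ∈ artinIdeal := by
    rw [← Ideal.Quotient.eq_zero_iff_mem, map_one]
    exact h
  simpa using coeff_pointMap_first h1 (d := 0) (by norm_num)

lemma linearIndependent_one :
    LinearIndependent ℚ ![artinVar 0, artinVar 1, artinVar 2] := by
  rw [Fintype.linearIndependent_iff]
  intro c hc
  have hmem : c 0 • X 0 + c 1 • X 1 + c 2 • X 2 ∈ artinIdeal := by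
    rw [← Ideal.Quotient.eq_zero_iff_mem, ← hc]
    simp [Fin.sum_univ_three]
    rfl
  have h1 := coeff_pointMap_first hmem (d := 1) (by norm_num)
  have h2 := coeff_pointMap_second hmem (d := 1) (by norm_num)
  have h3 := coeff_pointMap_mixed hmem (d := 1) (by norm_num)
  simp [pointMap_X] at h1 h2 h3
  intro i
  fin_cases i <;> simp <;> linarith

lemma linearIndependent_two :
    LinearIndependent ℚ ![artinVar 0 * artinVar 1, artinVar 2 * artinVar 3] := by
  rw [Fintype.linearIndependent_iff]
  intro c hc
  have hmem : c 0 • (X 0 * X 1) + c 1 • (X 2 * X 3) ∈ artinIdeal := by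
    rw [← Ideal.Quotient.eq_zero_iff_mem, ← hc]
    simp [Fin.sum_univ_two]
    rfl
  have h1 := coeff_pointMap_first hmem (d := 2) (by norm_num)
  have h2 := coeff_pointMap_second hmem (d := 2) (by norm_num)
  simp [pointMap_X, ← pow_two] at h1 h2
  intro i
  fin_cases i <;> simp <;> linarith

/-- the Artinian reduction of the six points on two disjoint lines
has Hilbert function (1,3,2) and has the WLP. -/
theorem six_points_on_two_lines_WLP :
    ∃ L ∈ homogeneousSubmodule (Fin 4) ℚ 1,
      (∀ g : MvPolynomial (Fin 4) ℚ, L * g ∈ sixPointsIdeal → g ∈ sixPointsIdeal) ∧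
      Module.finrank ℚ (quotPiece (sixPointsIdeal + Ideal.span {L}) 0) = 1 ∧
      Module.finrank ℚ (quotPiece (sixPointsIdeal + Ideal.span {L}) 1) = 3 ∧
      Module.finrank ℚ (quotPiece (sixPointsIdeal + Ideal.span {L}) 2) = 2 ∧
      (∀ i ≥ 3, quotPiece (sixPointsIdeal + Ideal.span {L}) i = ⊥) ∧
      ∃ l ∈ homogeneousSubmodule (Fin 4) ℚ 1, ∀ i : ℕ,
        (∀ x ∈ quotPiece (sixPointsIdeal + Ideal.span {L}) i,
            Ideal.Quotient.mk (sixPointsIdeal + Ideal.span {L}) l * x = 0 → x = 0) ∨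
        (∀ y ∈ quotPiece (sixPointsIdeal + Ideal.span {L}) (i + 1),
            ∃ x ∈ quotPiece (sixPointsIdeal + Ideal.span {L}) i,
              Ideal.Quotient.mk (sixPointsIdeal + Ideal.span {L}) l * x = y) := by
  have hhom : ∀ i : Fin 4, (X i : MvPolynomial (Fin 4) ℚ) ∈ homogeneousSubmodule (Fin 4) ℚ 1 :=
    fun i => isHomogeneous_X ℚ i
  have hsmul : ∀ (c : ℚ) (z : MvPolynomial (Fin 4) ℚ ⧸ artinIdeal),
      c • z = Ideal.Quotient.mk artinIdeal (C c) * z := fun c z => Algebra.smul_def c z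
  refine ⟨sumForm, add_mem (add_mem (add_mem (hhom 0) (hhom 1)) (hhom 2)) (hhom 3),
    sumForm_nonzerodivisor, ?_, ?_, ?_, fun i hi => quotPiece_eq_bot hi,
    X 0 + X 2, add_mem (hhom 0) (hhom 2), ?_⟩
  · rw [quotPiece_zero_eq, finrank_span_eq_card linearIndependent_zero, Fintype.card_fin]
  · rw [quotPiece_one_eq, finrank_span_eq_card linearIndependent_one, Fintype.card_fin]
  · rw [quotPiece_two_eq, finrank_span_eq_card linearIndependent_two, Fintype.card_fin]
  · rintro (_ | _ | i)
    · left
      intro x hx h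
      rw [quotPiece_zero_eq_span, Submodule.mem_span_singleton] at hx
      obtain ⟨c, rfl⟩ := hx
      rw [hsmul, mul_one] at h ⊢
      have hmem : (X 0 + X 2) * C c ∈ artinIdeal := by
        rw [← Ideal.Quotient.eq_zero_iff_mem, map_mul]
        exact h
      have hc := coeff_pointMap_first hmem (d := 1) (by norm_num)
      have hC : pointMap ![1, -1, 0, 0] (C c) = Polynomial.C c :=
        (pointMap ![1, -1, 0, 0]).commutes c
      simp [pointMap_X, hC] at hc
      rw [hc, map_zero, map_zero]
    · right
      intro y hy
      rw [zero_add, one_add_one_eq_two, quotPiece_two_eq, Submodule.mem_span_range_iff_exists_fun]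
        at hy
      obtain ⟨c, rfl⟩ := hy
      obtain ⟨h02, h12, h03, h13, -, -, h⟩ := artinVar_relations
      have m : ∀ i, artinVar i ∈ quotPiece artinIdeal 1 := fun i =>
        Submodule.mem_map_of_mem (hhom i)
      refine ⟨c 0 • artinVar 1 - c 1 • artinVar 2,
        sub_mem (Submodule.smul_mem _ _ (m 1)) (Submodule.smul_mem _ _ (m 2)), ?_⟩
      have h22 : artinVar 2 * artinVar 2 = -(artinVar 2 * artinVar 3) := by
        linear_combination artinVar 2 * h - h02 - h12
      have h21 : artinVar 2 * artinVar 1 = 0 := by rw [mul_comm, h12]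
      change (artinVar 0 + artinVar 2) * _ = _
      simp only [Fin.sum_univ_two, Matrix.cons_val, hsmul]
      linear_combination Ideal.Quotient.mk artinIdeal (C (c 0)) * h21
        - Ideal.Quotient.mk artinIdeal (C (c 1)) * (h02 + h22)
    · right
      intro y hy
      rw [quotPiece_eq_bot (by omega), Submodule.mem_bot] at hy
      exact ⟨0, zero_mem _, by rw [hy, mul_zero]⟩
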